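/- Let n ≥ 2 and s ∈ ℂ with Re(s) > 0. (1) For a = (a_1,…,a_n), a' = (a'_1,…,a'_n) ∈ ℂ^n with all entries purely imaginary: I_{n,n;a,a'}(s) = [∏_{j=1}^{n} Γ_ℝ(s+a'_1+a_j)]·I_{n,n−1;a,ã'}(s − a'_1/(n−1)), where ã' = (ã'_1,…,ã'_{n−1}) with ã'_j = a'_{j+1} + a'_1/(n−1). (2) For a = (a_1,…,a_n) ∈ ℂ^n and a' = (a'_1,…,a'_{n−1}) ∈ ℂ^{n−1} with all entries purely imaginary: I_{n,n−1;a,a'}(s) = [∏_{j=1}^{n−1} Γ_ℝ(s+a_1+a'_j)]·I_{n−1,n−1;ã,a'}(s − a_1/(n−1)), where ã = (ã_1,…,ã_{n−1}) with ã_j = a_{j+1} + a_1/(n−1). -/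

import Mathlib

open MeasureTheory Complex

noncomputable section

/-- `Γ_ℝ(s) = π^{-s/2} Γ(s/2)`. -/
def GammaR (s : ℂ) : ℂ := (Real.pi : ℂ) ^ (-s / 2) * Complex.Gamma (s / 2)

/-- Modified Bessel function of the second kind, via its integral representation. -/
def BesselK (ν : ℂ) (y : ℝ) : ℂ :=
  (1 / 2) * ∫ t in Set.Ioi (0 : ℝ),
    Complex.exp (-((y : ℂ) / 2) * ((t : ℂ) + 1 / (t : ℂ))) * (t : ℂ) ^ ν / (t : ℂ)

/-- Extend a finite real tuple to `ℕ`, defaulting to `1`. -/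
def extR {k : ℕ} (t : Fin k → ℝ) : ℕ → ℝ := fun i => if h : i < k then t ⟨i, h⟩ else 1

/-- Extend a finite real tuple to `ℕ`, defaulting to `0`. -/
def extR0 {k : ℕ} (t : Fin k → ℝ) : ℕ → ℝ := fun i => if h : i < k then t ⟨i, h⟩ else 0

/-- The positive orthant. -/
def posSet (k : ℕ) : Set (Fin k → ℝ) := {t | ∀ j, 0 < t j}

/-- `|a| = a_1 + ⋯ + a_n` (0-based indexing). -/
def sumA (n : ℕ) (a : ℕ → ℂ) : ℂ := ∑ j ∈ Finset.range n, a j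

/-- `ã_j = a_{j+1} + a_1/(n-1)` (0-based indexing). -/
def tildeA (n : ℕ) (a : ℕ → ℂ) : ℕ → ℂ := fun j => a (j + 1) + a 0 / ((n : ℂ) - 1)

/-- The normalized radial part `Ŵ^A_{n,a}` of the class one `GL_n(ℝ)` Whittaker function,
as a function of `(y_1,…,y_{n-1})` (0-based indexing). -/
def WhittAr : ℕ → (ℕ → ℂ) → (ℕ → ℝ) → ℂ
  | 0, _, _ => 1
  | 1, _, _ => 1
  | 2, a, y => 2 * ((y 0 : ℂ) ^ ((a 0 + a 1) / 2)) *
      BesselK ((a 0 - a 1) / 2) (2 * Real.pi * y 0)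
  | (n + 3), a, y =>
      ∫ t in posSet (n + 2),
        WhittAr (n + 2) (tildeA (n + 3) a)
            (fun j => y (j + 1) * Real.sqrt (extR t (j + 1) / extR t j)) *
          (∏ j ∈ Finset.range (n + 2),
            Complex.exp (((-(Real.pi * y j) ^ 2 * extR t j - 1 / extR t j : ℝ) : ℂ)) *
              ((Real.pi * y j : ℝ) : ℂ) ^ ((((n + 2 - j : ℕ) : ℂ) * a 0) / ((n + 2 : ℕ) : ℂ)) *
              ((extR t j : ℝ) : ℂ) ^ ((((n + 3 : ℕ) : ℂ) * a 0) / (2 * ((n + 2 : ℕ) : ℂ)))) *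
          ((Real.pi * extR t (n + 1) : ℝ) : ℂ) ^ (-(sumA (n + 3) a) / 2) *
          (∏ j ∈ Finset.range (n + 2), ((extR t j : ℝ) : ℂ))⁻¹

/-- `Ŵ^A_{n,a}` as a function of the full tuple `(y_1,…,y_n)`. -/
def WhittAhat (n : ℕ) (a : ℕ → ℂ) (y : ℕ → ℝ) : ℂ :=
  ((y (n - 1) : ℝ) : ℂ) ^ sumA n a * WhittAr n a y

/-- The Mellin transform `U_{n,a}` (0-based: `s j` stands for `s_{j+1}`). -/
def Ufun (n : ℕ) (a : ℕ → ℂ) (s : ℕ → ℂ) : ℂ :=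
  ∫ y in posSet (n - 1),
    WhittAr n a (extR y) *
      ∏ j ∈ Finset.range (n - 1), ((extR y j : ℝ) : ℂ) ^ s j / ((extR y j : ℝ) : ℂ)

/-- The normalized radial part `Ŵ^B_{n,b}` of the class one `SO_{2n+1}(ℝ)` Whittaker function. -/
def WhittBr : ℕ → (ℕ → ℂ) → (ℕ → ℝ) → ℂ
  | 0, _, _ => 1
  | 1, b, y => 2 * BesselK (b 0 / 2) (2 * Real.pi * y 0)
  | (n + 2), b, y =>
      ∫ p in (posSet (n + 2) ×ˢ posSet (n + 1)),
        WhittBr (n + 1) b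
            (fun j =>
              if j < n then
                y (j + 1) *
                  Real.sqrt (extR p.1 (j + 1) * extR p.2 (j + 1) /
                    (extR p.1 (j + 2) * extR p.2 j))
              else y (n + 1) * Real.sqrt (extR p.1 (n + 1) / extR p.2 n)) *
          (∏ j ∈ Finset.range (n + 2),
            Complex.exp (((-(Real.pi * y j) ^ 2 * extR p.1 j - 1 / extR p.1 j : ℝ) : ℂ)) *
              ((Real.pi * y j : ℝ) : ℂ) ^ b (n + 1)) *
          (∏ j ∈ Finset.range (n + 1),
            Complex.exp (((-(Real.pi * y j) ^ 2 * (extR p.1 j / extR p.1 (j + 1)) * extR p.2 j -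
                  1 / extR p.2 j : ℝ) : ℂ)) *
              ((extR p.1 (j + 1) * extR p.2 j : ℝ) : ℂ) ^ (b (n + 1) / 2)) *
          ((extR p.1 0 : ℝ) : ℂ) ^ b (n + 1) *
          (∏ j ∈ Finset.range (n + 1), ((extR p.2 j : ℝ) : ℂ))⁻¹ *
          (∏ j ∈ Finset.range (n + 2), ((extR p.1 j : ℝ) : ℂ))⁻¹

/-- The Mellin transform `V_{n,b}` (0-based: `s j` stands for `s_{j+1}`). -/
def Vfun (n : ℕ) (b : ℕ → ℂ) (s : ℕ → ℂ) : ℂ :=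
  ∫ y in posSet n,
    WhittBr n b (extR y) *
      ∏ j ∈ Finset.range n, ((extR y j : ℝ) : ℂ) ^ s j / ((extR y j : ℝ) : ℂ)

/-- Integral over the vertical line `Re z = c`, i.e. `i·∫_ℝ f(c+it) dt`. -/
def VInt (c : ℝ) (f : ℂ → ℂ) : ℂ := Complex.I * ∫ t : ℝ, f (c + t * Complex.I)

/-- Iterated integral over `k` vertical lines with abscissas `c 0, …, c (k-1)`;
the integrand is fed the contour points as a 0-based sequence. -/
def VIntK (k : ℕ) (c : ℕ → ℝ) (f : (ℕ → ℂ) → ℂ) : ℂ :=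
  Complex.I ^ k * ∫ t : Fin k → ℝ, f (fun i => (c i : ℂ) + (extR0 t i : ℝ) * Complex.I)



/-- The archimedean `GL_n × GL_n` zeta integral in torus coordinates. -/
def zetaGLGL (n : ℕ) (a a' : ℕ → ℂ) (s : ℂ) : ℂ :=
  (2 : ℂ) ^ n * ∫ y in posSet n,
    Complex.exp (((-(Real.pi * extR y (n - 1) ^ 2) : ℝ) : ℂ)) *
      WhittAhat n a (extR y) * WhittAhat n a' (extR y) *
      ∏ j ∈ Finset.range n,
        ((extR y j : ℝ) : ℂ) ^ (((j + 1 : ℕ) : ℂ) * s) / ((extR y j : ℝ) : ℂ)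

/-- The archimedean `GL_n × GL_m` zeta integral (`m < n`) in torus coordinates. -/
def zetaGLm (n m : ℕ) (a a' : ℕ → ℂ) (s : ℂ) : ℂ :=
  (2 : ℂ) ^ m * ∫ y in posSet m,
    WhittAhat n a (extR y) * WhittAhat m a' (extR y) *
      ∏ j ∈ Finset.range m,
        ((extR y j : ℝ) : ℂ) ^ (((j + 1 : ℕ) : ℂ) * s) / ((extR y j : ℝ) : ℂ)

/-! In logarithmic coordinates the Whittaker functions are iterated Givental integrals: `givental α`
is the integral of `givental (Fin.tail α)` against a kernel that depends on `α 0` only. The weight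
of either zeta integral times a Givental kernel is again a weight times a kernel, that of the Baxter
operator (`gaussianDetWeight_mul_giventalKernel`, `detWeight_mul_giventalKernel`). So unfolding one
layer of one Whittaker function and exchanging the integrals applies the Baxter operator to the
other Whittaker function, which is an eigenfunction with eigenvalue a product of gamma functions
(`integral_baxterKernel_mul_givental`); what is left is the zeta integral of smaller rank.

The eigenfunction property holds by induction on the rank, because the Baxter and Givental operators
commute up to a gamma factor: the substitution `exchangeMap`, which reflects and translates each
coordinate, turns one product of kernels into the other and frees one variable, whose integral is
the gamma factor. Convergence comes from the same computation for the integrals of the absolute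
values, with values in `[0, ∞]`, where every exchange of integrals is permitted. -/

open scoped Real ENNReal

section FunctionComposition

variable {X Y : Type*} [MeasurableSpace X] [MeasurableSpace Y] {μ : Measure X} {ν : Measure Y}
  [SFinite μ] [SFinite ν]

lemma lintegral_mul_lintegral_mul {φ : X → ℝ≥0∞} {k : X → Y → ℝ≥0∞} {f : Y → ℝ≥0∞}
    (hφ : Measurable φ) (hk : Measurable (Function.uncurry k)) (hf : Measurable f) :
    ∫⁻ x, φ x * ∫⁻ y, k x y * f y ∂ν ∂μ = ∫⁻ y, (∫⁻ x, φ x * k x y ∂μ) * f y ∂ν := by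
  calc ∫⁻ x, φ x * ∫⁻ y, k x y * f y ∂ν ∂μ
    _ = ∫⁻ x, ∫⁻ y, φ x * k x y * f y ∂ν ∂μ := by
      refine lintegral_congr fun x => ?_
      simp only [mul_assoc]
      exact (lintegral_const_mul _ (hk.of_uncurry_left.mul hf)).symm
    _ = ∫⁻ y, ∫⁻ x, φ x * k x y * f y ∂μ ∂ν := by
      refine lintegral_lintegral_swap (Measurable.aemeasurable ?_)
      exact ((hφ.comp measurable_fst).mul hk).mul (hf.comp measurable_snd)
    _ = ∫⁻ y, (∫⁻ x, φ x * k x y ∂μ) * f y ∂ν :=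
      lintegral_congr fun y => lintegral_mul_const _ (hφ.mul hk.of_uncurry_right)

lemma integral_mul_integral_mul {φ : X → ℂ} {k : X → Y → ℂ} {f : Y → ℂ} {Φ : X → ℝ≥0∞}
    {F : Y → ℝ≥0∞} (hφ : Measurable φ) (hk : Measurable (Function.uncurry k)) (hf : Measurable f)
    (hΦ : ∀ x, ‖φ x‖ₑ ≤ Φ x) (hF : ∀ y, ‖f y‖ₑ ≤ F y)
    (hfin : ∫⁻ x, Φ x * ∫⁻ y, ‖k x y‖ₑ * F y ∂ν ∂μ ≠ ∞) :
    ∫ x, φ x * ∫ y, k x y * f y ∂ν ∂μ = ∫ y, (∫ x, φ x * k x y ∂μ) * f y ∂ν := by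
  have hm : Measurable (Function.uncurry fun x y => φ x * (k x y * f y)) :=
    (hφ.comp measurable_fst).mul (hk.mul (hf.comp measurable_snd))
  have hint : Integrable (Function.uncurry fun x y => φ x * (k x y * f y)) (μ.prod ν) := by
    refine ⟨hm.aestronglyMeasurable, ?_⟩
    rw [hasFiniteIntegral_iff_enorm, lintegral_prod _ hm.enorm.aemeasurable]
    refine lt_of_le_of_lt (lintegral_mono fun x => ?_) hfin.lt_top
    have hkf : Measurable fun y => ‖k x y‖ₑ * ‖f y‖ₑ := hk.of_uncurry_left.enorm.mul hf.enorm
    simp only [Function.uncurry_apply_pair, enorm_mul]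
    rw [lintegral_const_mul _ hkf]
    gcongr with y
    · exact hΦ x
    · exact hF y
  simp only [← integral_const_mul, ← integral_mul_const]
  rw [integral_integral_swap hint]
  simp only [mul_assoc]

lemma lintegral_mul_lintegral_of_intertwine {p g : X → ℝ≥0∞} {q f : Y → ℝ≥0∞}
    {k : X → Y → ℝ≥0∞} {l : Y → X → ℝ≥0∞} (hpq : ∀ x y, p x * k x y = q y * l y x)
    (hp : Measurable p) (hg : Measurable g) (hk : Measurable (Function.uncurry k))
    (hl : Measurable (Function.uncurry l)) (hf : Measurable f) :
    ∫⁻ x, p x * g x * ∫⁻ y, k x y * f y ∂ν ∂μ =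
      ∫⁻ y, q y * (∫⁻ x, l y x * g x ∂μ) * f y ∂ν := by
  rw [lintegral_mul_lintegral_mul (φ := fun x => p x * g x) (hp.mul hg) hk hf]
  refine lintegral_congr fun y => ?_
  have hlg : Measurable fun x => l y x * g x := hl.of_uncurry_left.mul hg
  rw [← lintegral_const_mul _ hlg]
  congr 2 with x
  rw [mul_right_comm, hpq, mul_assoc]

lemma integral_mul_integral_of_intertwine {p g : X → ℂ} {q f : Y → ℂ} {k : X → Y → ℂ}
    {l : Y → X → ℂ} {G : X → ℝ≥0∞} {F : Y → ℝ≥0∞} (hpq : ∀ x y, p x * k x y = q y * l y x)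
    (hp : Measurable p) (hg : Measurable g) (hk : Measurable (Function.uncurry k))
    (hf : Measurable f) (hG : ∀ x, ‖g x‖ₑ ≤ G x) (hF : ∀ y, ‖f y‖ₑ ≤ F y)
    (hfin : ∫⁻ x, ‖p x‖ₑ * G x * ∫⁻ y, ‖k x y‖ₑ * F y ∂ν ∂μ ≠ ∞) :
    ∫ x, p x * g x * ∫ y, k x y * f y ∂ν ∂μ = ∫ y, q y * (∫ x, l y x * g x ∂μ) * f y ∂ν := by
  rw [integral_mul_integral_mul (φ := fun x => p x * g x) (hp.mul hg) hk hf (fun x => ?_) hF hfin]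
  · refine integral_congr_ae (.of_forall fun y => ?_)
    simp only [← integral_const_mul]
    congr 2 with x
    rw [mul_right_comm, hpq, mul_assoc]
  · rw [enorm_mul]
    gcongr
    exact hG x

end FunctionComposition

section LogGamma

lemma setIntegral_Ioi_eq_integral_exp (f : ℝ → ℂ) :
    ∫ t in Set.Ioi (0 : ℝ), f t = ∫ x : ℝ, (rexp x : ℂ) * f (rexp x) := by
  rw [← Real.range_exp, ← Set.image_univ,
    integral_image_eq_integral_abs_deriv_smul MeasurableSet.univ
      (fun x _ => (Real.hasDerivAt_exp x).hasDerivWithinAt) Real.exp_injective.injOn,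
    setIntegral_univ]
  simp [abs_of_pos (Real.exp_pos _)]

lemma ofReal_exp_cpow (x : ℝ) (c : ℂ) : (rexp x : ℂ) ^ c = cexp (c * x) := by
  rw [Complex.cpow_def_of_ne_zero (by exact_mod_cast (Real.exp_pos x).ne'),
    ← Complex.ofReal_log (Real.exp_pos x).le, Real.log_exp, mul_comm]

/-- The integrand of `Γ(c)` in the logarithmic variable `x = -log t`. -/
def gammaKernel (c : ℂ) (x : ℝ) : ℂ := cexp (-c * x - (rexp (-x) : ℝ))

@[fun_prop] lemma measurable_gammaKernel (c : ℂ) : Measurable (gammaKernel c) := by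
  unfold gammaKernel
  fun_prop

lemma integral_gammaKernel {c : ℂ} (hc : 0 < c.re) : ∫ x, gammaKernel c x = Gamma c := by
  rw [Gamma_eq_integral hc, GammaIntegral, setIntegral_Ioi_eq_integral_exp,
    ← integral_neg_eq_self]
  refine integral_congr_ae (.of_forall fun x => ?_)
  beta_reduce
  rw [gammaKernel, ofReal_exp_cpow]
  simp only [ofReal_exp, ← Complex.exp_add]
  congr 1
  push_cast
  ring_nf

lemma lintegral_enorm_gammaKernel_ne_top {c : ℂ} (hc : 0 < c.re) :
    ∫⁻ x, ‖gammaKernel c x‖ₑ ≠ ∞ := by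
  have hint : Integrable (gammaKernel c) :=
    .of_integral_ne_zero (by simpa [integral_gammaKernel hc] using Gamma_ne_zero_of_re_pos hc)
  exact hint.2.ne

end LogGamma

section Kernels

variable {n : ℕ}

/-- The tuple `V` followed by `0`. Setting the last logarithmic coordinate to `0` restricts a
function on the torus of `GL_{n+1}` to that of `GL_n`. -/
def appendZero (V : Fin n → ℝ) : Fin (n + 1) → ℝ := Fin.snoc V 0

@[simp] lemma appendZero_castSucc (V : Fin n → ℝ) (j : Fin n) : appendZero V j.castSucc = V j := by
  simp [appendZero]

@[simp] lemma appendZero_last (V : Fin n → ℝ) : appendZero V (Fin.last n) = 0 := by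
  simp [appendZero]

lemma appendZero_nonneg {V : Fin n → ℝ} (hV : ∀ j, 0 ≤ V j) (j : Fin (n + 1)) :
    0 ≤ appendZero V j := by
  induction j using Fin.lastCases with
  | last => simp
  | cast j => simpa using hV j

lemma sum_appendZero (V : Fin n → ℝ) : ∑ j, appendZero V j = ∑ j, V j := by
  simp [Fin.sum_univ_castSucc]

@[fun_prop] lemma measurable_appendZero {X : Type*} [MeasurableSpace X] {f : X → Fin n → ℝ}
    (hf : Measurable f) : Measurable fun x => appendZero (f x) := by
  refine measurable_pi_lambda _ fun j => ?_
  induction j using Fin.lastCases with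
  | last => simp
  | cast j => simp only [appendZero_castSucc]; fun_prop

/-- The potential `∑ⱼ (exp (ηⱼ - ξⱼ) + exp (ξⱼ₊₁ - ηⱼ))` of the Givental kernel. -/
def giventalPotential (ξ : Fin (n + 1) → ℝ) (η : Fin n → ℝ) : ℝ :=
  ∑ j, (rexp (η j - ξ j.castSucc) + rexp (ξ j.succ - η j))

/-- The potential `∑ⱼ (exp (uⱼ - Vⱼ) + exp (Vⱼ₊₁ - uⱼ))` of the Baxter kernel, where the term
containing the nonexistent last `Vⱼ₊₁` is absent: `appendZero` supplies `0` for `exp Vⱼ₊₁`. -/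
def baxterPotential (u V : Fin n → ℝ) : ℝ :=
  ∑ j, (rexp (u j - V j) + appendZero (fun i => rexp (V i)) j.succ * rexp (-u j))

/-- The potential `exp (-ξₙ)` of the Gaussian factor in the `GL_n × GL_n` zeta integral, which is
`0` for `n = 0`. -/
def gaussianPotential : {n : ℕ} → (Fin n → ℝ) → ℝ
  | 0, _ => 0
  | n + 1, ξ => rexp (-ξ (Fin.last n))

lemma giventalPotential_add_gaussianPotential (ξ : Fin (n + 1) → ℝ) (η : Fin n → ℝ) :
    giventalPotential ξ η + gaussianPotential ξ = baxterPotential (appendZero η) ξ := by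
  simp only [giventalPotential, baxterPotential, gaussianPotential, Fin.sum_univ_castSucc,
    Fin.succ_castSucc, Fin.succ_last, appendZero_castSucc, appendZero_last, ← Real.exp_add]
  simp [sub_eq_add_neg]

lemma giventalPotential_appendZero (V w : Fin n → ℝ) :
    giventalPotential (appendZero V) w = baxterPotential w V + gaussianPotential w := by
  cases n with
  | zero => simp [giventalPotential, baxterPotential, gaussianPotential]
  | succ n =>
    simp only [giventalPotential, baxterPotential, gaussianPotential,
      Fin.sum_univ_castSucc (n := n), Fin.succ_castSucc, Fin.succ_last, appendZero_castSucc,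
      appendZero_last, ← Real.exp_add, sub_eq_add_neg]
    ring_nf

/-- The kernel of the operator that builds `GL_{n+1}` Whittaker functions from those of `GL_n`, in
logarithmic coordinates. -/
def giventalKernel (α : ℂ) (ξ : Fin (n + 1) → ℝ) (η : Fin n → ℝ) : ℂ :=
  cexp (α * (∑ j, η j - ∑ j, ξ j : ℝ) - giventalPotential ξ η)

/-- The kernel of the Baxter operator, of which the Whittaker functions are eigenfunctions, in
logarithmic coordinates. -/
def baxterKernel (θ : ℂ) (u V : Fin n → ℝ) : ℂ :=
  cexp (θ * (∑ j, u j - ∑ j, V j : ℝ) - baxterPotential u V)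

/-- The power `|det|^{2θ}` on the torus, in logarithmic coordinates. -/
def detWeight (θ : ℂ) (ξ : Fin n → ℝ) : ℂ := cexp (-θ * (∑ j, ξ j : ℝ))

/-- The power `|det|^{2θ}` times the Gaussian factor of the `GL_n × GL_n` zeta integral. -/
def gaussianDetWeight (θ : ℂ) (ξ : Fin n → ℝ) : ℂ :=
  cexp (-θ * (∑ j, ξ j : ℝ) - gaussianPotential ξ)

section Measurability

variable {X : Type*} [MeasurableSpace X]

@[fun_prop] lemma measurable_giventalKernel (α : ℂ) {f : X → Fin (n + 1) → ℝ} {g : X → Fin n → ℝ}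
    (hf : Measurable f) (hg : Measurable g) :
    Measurable fun x => giventalKernel α (f x) (g x) := by
  unfold giventalKernel giventalPotential
  fun_prop

@[fun_prop] lemma measurable_baxterKernel (θ : ℂ) {f g : X → Fin n → ℝ} (hf : Measurable f)
    (hg : Measurable g) : Measurable fun x => baxterKernel θ (f x) (g x) := by
  unfold baxterKernel baxterPotential
  fun_prop

@[fun_prop] lemma measurable_detWeight (θ : ℂ) : Measurable (detWeight θ : (Fin n → ℝ) → ℂ) := by
  unfold detWeight
  fun_prop

@[fun_prop] lemma measurable_gaussianPotential :
    Measurable (gaussianPotential : (Fin n → ℝ) → ℝ) := by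
  cases n with
  | zero => exact measurable_const
  | succ n =>
    change Measurable fun ξ : Fin (n + 1) → ℝ => rexp (-ξ (Fin.last n))
    fun_prop

@[fun_prop] lemma measurable_gaussianDetWeight (θ : ℂ) :
    Measurable (gaussianDetWeight θ : (Fin n → ℝ) → ℂ) := by
  unfold gaussianDetWeight
  fun_prop

end Measurability

lemma detWeight_mul_giventalKernel (θ α : ℂ) (V w : Fin n → ℝ) :
    detWeight θ V * giventalKernel α (appendZero V) w =
      gaussianDetWeight θ w * baxterKernel (θ + α) w V := by
  simp only [detWeight, giventalKernel, gaussianDetWeight, baxterKernel, ← Complex.exp_add,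
    giventalPotential_appendZero, sum_appendZero]
  congr 1
  push_cast
  ring

lemma gaussianDetWeight_mul_giventalKernel (θ α : ℂ) (ξ : Fin (n + 1) → ℝ) (η : Fin n → ℝ) :
    gaussianDetWeight θ ξ * giventalKernel α ξ η =
      detWeight θ η * baxterKernel (θ + α) (appendZero η) ξ := by
  simp only [detWeight, giventalKernel, gaussianDetWeight, baxterKernel, ← Complex.exp_add,
    ← giventalPotential_add_gaussianPotential, sum_appendZero]
  congr 1
  push_cast
  ring

end Kernels

section Exchange

variable {n : ℕ} (u : Fin (n + 1) → ℝ) (w : Fin n → ℝ)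

/-- The coefficient of `exp (-Vⱼ)` in `baxterPotential u V + giventalPotential V w`. -/
def exchangeNum (j : Fin (n + 1)) : ℝ := rexp (u j) + appendZero (fun i => rexp (w i)) j

/-- The coefficient of `exp (Vⱼ₊₁)` in `baxterPotential u V + giventalPotential V w`. -/
def exchangeDen (j : Fin n) : ℝ := rexp (-u j.castSucc) + rexp (-w j)

/-- The substitution `V = exchangeMap u w (x, v)` that exchanges the Baxter and the Givental
kernels. The coordinate `Vⱼ₊₁` is reflected so that its two exponential terms trade places, and
`V₀`, which has only one, is translated. -/
def exchangeMap (p : ℝ × (Fin n → ℝ)) : Fin (n + 1) → ℝ :=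
  Fin.cons (Real.log (exchangeNum u w 0) + p.1)
    fun j => Real.log (exchangeNum u w j.succ) - Real.log (exchangeDen u w j) - p.2 j

lemma exchangeNum_pos (j : Fin (n + 1)) : 0 < exchangeNum u w j :=
  add_pos_of_pos_of_nonneg (Real.exp_pos _) (appendZero_nonneg (fun _ => (Real.exp_pos _).le) _)

lemma exchangeDen_pos (j : Fin n) : 0 < exchangeDen u w j :=
  add_pos (Real.exp_pos _) (Real.exp_pos _)

@[simp] lemma exchangeMap_zero (p : ℝ × (Fin n → ℝ)) :
    exchangeMap u w p 0 = Real.log (exchangeNum u w 0) + p.1 := rfl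

@[simp] lemma exchangeMap_succ (p : ℝ × (Fin n → ℝ)) (j : Fin n) :
    exchangeMap u w p j.succ =
      Real.log (exchangeNum u w j.succ) - Real.log (exchangeDen u w j) - p.2 j := rfl

lemma log_exchangeNum_castSucc (j : Fin n) :
    Real.log (exchangeNum u w j.castSucc) =
      Real.log (exchangeDen u w j) + (u j.castSucc + w j) := by
  have hmul : exchangeNum u w j.castSucc = exchangeDen u w j * rexp (u j.castSucc + w j) := by
    simp only [exchangeNum, exchangeDen, appendZero_castSucc, add_mul, ← Real.exp_add]
    ring_nf
  rw [hmul, Real.log_mul (exchangeDen_pos ..).ne' (Real.exp_pos _).ne', Real.log_exp]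

lemma log_exchangeNum_last : Real.log (exchangeNum u w (Fin.last n)) = u (Fin.last n) := by
  simp [exchangeNum]

lemma sum_exchangeMap (p : ℝ × (Fin n → ℝ)) :
    ∑ j, exchangeMap u w p j = p.1 + ∑ j, u j + ∑ j, w j - ∑ j, p.2 j := by
  have hnum := Fin.sum_univ_succ fun j => Real.log (exchangeNum u w j)
  simp only [Fin.sum_univ_castSucc (n := n), log_exchangeNum_castSucc, log_exchangeNum_last,
    Finset.sum_add_distrib] at hnum
  simp only [Fin.sum_univ_succ (n := n), exchangeMap_zero, exchangeMap_succ,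
    Finset.sum_sub_distrib]
  rw [← Fin.sum_univ_succ, Fin.sum_univ_castSucc]
  linarith

lemma baxterPotential_add_giventalPotential (V : Fin (n + 1) → ℝ) :
    baxterPotential u V + giventalPotential V w =
      ∑ j, exchangeNum u w j * rexp (-V j) + ∑ j, exchangeDen u w j * rexp (V j.succ) := by
  simp only [baxterPotential, giventalPotential, exchangeNum, exchangeDen, add_mul,
    Finset.sum_add_distrib, sub_eq_add_neg, Real.exp_add]
  rw [Fin.sum_univ_castSucc (f := fun j => appendZero (fun i => rexp (V i)) (Fin.succ j) * _),
    Fin.sum_univ_castSucc (f := fun j => appendZero (fun i => rexp (w i)) j * _)]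
  simp only [Fin.succ_castSucc, Fin.succ_last, appendZero_castSucc, appendZero_last, zero_mul,
    add_zero, mul_comm]
  ring

lemma giventalPotential_add_baxterPotential (v : Fin n → ℝ) :
    giventalPotential u v + baxterPotential v w =
      ∑ j, exchangeNum u w j.succ * rexp (-v j) + ∑ j, exchangeDen u w j * rexp (v j) := by
  simp only [baxterPotential, giventalPotential, exchangeNum, exchangeDen, add_mul,
    Finset.sum_add_distrib, sub_eq_add_neg, Real.exp_add]
  simp only [mul_comm]
  ring

lemma exchangePotential_exchangeMap (p : ℝ × (Fin n → ℝ)) :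
    baxterPotential u (exchangeMap u w p) + giventalPotential (exchangeMap u w p) w =
      rexp (-p.1) + (giventalPotential u p.2 + baxterPotential p.2 w) := by
  have hnum := fun j => (exchangeNum_pos u w j).ne'
  have hden := fun j => (exchangeDen_pos u w j).ne'
  have hzero : exchangeNum u w 0 * rexp (-exchangeMap u w p 0) = rexp (-p.1) := by
    rw [exchangeMap_zero, neg_add, Real.exp_add, Real.exp_neg, Real.exp_log (exchangeNum_pos ..),
      mul_inv_cancel_left₀ (hnum 0)]
  have hneg (j : Fin n) : exchangeNum u w j.succ * rexp (-exchangeMap u w p j.succ) =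
      exchangeDen u w j * rexp (p.2 j) := by
    simp only [exchangeMap_succ, neg_sub, Real.exp_sub, Real.exp_log (exchangeNum_pos ..),
      Real.exp_log (exchangeDen_pos ..)]
    field_simp [hnum j.succ, hden j]
  have hpos (j : Fin n) : exchangeDen u w j * rexp (exchangeMap u w p j.succ) =
      exchangeNum u w j.succ * rexp (-p.2 j) := by
    simp only [exchangeMap_succ, Real.exp_sub, Real.exp_neg, Real.exp_log (exchangeNum_pos ..),
      Real.exp_log (exchangeDen_pos ..)]
    field_simp [hnum j.succ, hden j]
  rw [baxterPotential_add_giventalPotential, giventalPotential_add_baxterPotential,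
    Fin.sum_univ_succ, hzero]
  simp only [hneg, hpos]
  ring

lemma baxterKernel_mul_giventalKernel_exchangeMap (θ α : ℂ) (p : ℝ × (Fin n → ℝ)) :
    baxterKernel θ u (exchangeMap u w p) * giventalKernel α (exchangeMap u w p) w =
      gammaKernel (θ + α) p.1 * (giventalKernel α u p.2 * baxterKernel θ p.2 w) := by
  have hpot := congrArg ((↑) : ℝ → ℂ) (exchangePotential_exchangeMap u w p)
  simp only [baxterKernel, giventalKernel, gammaKernel, ← Complex.exp_add, sum_exchangeMap]
  congr 1
  push_cast at hpot ⊢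
  linear_combination -hpot

/-- `exchangeMap` as a composition of measurable equivalences. -/
def exchangeEquiv : ℝ × (Fin n → ℝ) ≃ᵐ (Fin (n + 1) → ℝ) :=
  ((MeasurableEquiv.addLeft (Real.log (exchangeNum u w 0))).prodCongr
    (MeasurableEquiv.subLeft fun j =>
      Real.log (exchangeNum u w j.succ) - Real.log (exchangeDen u w j))).trans
        (MeasurableEquiv.piFinSuccAbove (fun _ => ℝ) 0).symm

lemma coe_exchangeEquiv : ⇑(exchangeEquiv u w) = exchangeMap u w :=
  funext fun _ => Fin.insertNth_zero' ..

lemma measurePreserving_exchangeMap : MeasurePreserving (exchangeMap u w) := by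
  rw [← coe_exchangeEquiv]
  exact (volume_preserving_piFinSuccAbove (fun _ => ℝ) 0).symm.comp
    ((measurePreserving_add_left volume _).prod (Measure.measurePreserving_sub_left volume _))

lemma measurableEmbedding_exchangeMap : MeasurableEmbedding (exchangeMap u w) := by
  rw [← coe_exchangeEquiv]
  exact (exchangeEquiv u w).measurableEmbedding

lemma lintegral_enorm_baxterKernel_mul_giventalKernel (θ α : ℂ) :
    ∫⁻ V, ‖baxterKernel θ u V‖ₑ * ‖giventalKernel α V w‖ₑ =
      (∫⁻ x, ‖gammaKernel (θ + α) x‖ₑ) *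
        ∫⁻ v, ‖giventalKernel α u v‖ₑ * ‖baxterKernel θ v w‖ₑ := by
  rw [← (measurePreserving_exchangeMap u w).lintegral_comp_emb
      (measurableEmbedding_exchangeMap u w), ← lintegral_prod_mul (by fun_prop) (by fun_prop)]
  simp only [← enorm_mul, baxterKernel_mul_giventalKernel_exchangeMap, Measure.volume_eq_prod]

lemma integral_baxterKernel_mul_giventalKernel {θ α : ℂ} (h : 0 < (θ + α).re) :
    ∫ V, baxterKernel θ u V * giventalKernel α V w =
      Gamma (θ + α) * ∫ v, giventalKernel α u v * baxterKernel θ v w := by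
  rw [← (measurePreserving_exchangeMap u w).integral_comp (measurableEmbedding_exchangeMap u w),
    ← integral_gammaKernel h, ← integral_prod_mul]
  simp only [baxterKernel_mul_giventalKernel_exchangeMap, Measure.volume_eq_prod]

end Exchange

section Givental

variable {n : ℕ}

/-- The Givental integral for the class one `GL_n(ℝ)` Whittaker function in logarithmic
coordinates. The parameters `α` are half of the Langlands parameters. -/
def givental : {n : ℕ} → (Fin n → ℂ) → (Fin n → ℝ) → ℂ
  | 0, _, _ => 1
  | _ + 1, α, ξ => ∫ η, giventalKernel (α 0) ξ η * givental (Fin.tail α) η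

/-- The Givental integral of the absolute values, with values in `[0, ∞]`: it dominates `givental`
and controls every application of Fubini's theorem. -/
def giventalMajorant : {n : ℕ} → (Fin n → ℂ) → (Fin n → ℝ) → ℝ≥0∞
  | 0, _, _ => 1
  | _ + 1, α, ξ => ∫⁻ η, ‖giventalKernel (α 0) ξ η‖ₑ * giventalMajorant (Fin.tail α) η

@[fun_prop] lemma measurable_givental (α : Fin n → ℂ) : Measurable (givental α) := by
  induction n with
  | zero => exact measurable_const
  | succ n ih =>
    refine StronglyMeasurable.measurable (StronglyMeasurable.integral_prod_right
      (f := fun ξ η => giventalKernel (α 0) ξ η * givental (Fin.tail α) η)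
      (Measurable.stronglyMeasurable ?_))
    exact Measurable.mul (by fun_prop) ((ih _).comp measurable_snd)

@[fun_prop] lemma measurable_giventalMajorant (α : Fin n → ℂ) :
    Measurable (giventalMajorant α) := by
  induction n with
  | zero => exact measurable_const
  | succ n ih =>
    refine Measurable.lintegral_prod_right
      (f := fun ξ η => ‖giventalKernel (α 0) ξ η‖ₑ * giventalMajorant (Fin.tail α) η) ?_
    exact Measurable.mul (by fun_prop) ((ih _).comp measurable_snd)

lemma enorm_givental_le (α : Fin n → ℂ) (ξ : Fin n → ℝ) :
    ‖givental α ξ‖ₑ ≤ giventalMajorant α ξ := by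
  induction n with
  | zero => simp [givental, giventalMajorant]
  | succ n ih =>
    refine (enorm_integral_le_lintegral_enorm _).trans (lintegral_mono fun η => ?_)
    rw [enorm_mul]
    gcongr
    exact ih _ η

lemma giventalMajorant_ne_zero (α : Fin n → ℂ) (ξ : Fin n → ℝ) : giventalMajorant α ξ ≠ 0 := by
  induction n with
  | zero => exact one_ne_zero
  | succ n ih =>
    rw [giventalMajorant, Ne, lintegral_eq_zero_iff (by fun_prop)]
    intro hzero
    obtain ⟨η, hη⟩ := hzero.exists
    simp [giventalKernel, ih] at hη

lemma ae_giventalMajorant_tail_ne_top {α : Fin (n + 1) → ℂ} {ξ : Fin (n + 1) → ℝ}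
    (h : giventalMajorant α ξ ≠ ∞) : ∀ᵐ η, giventalMajorant (Fin.tail α) η ≠ ∞ := by
  rw [giventalMajorant] at h
  filter_upwards [ae_lt_top (by fun_prop) h] with η hη htop
  simp [htop, ENNReal.mul_top, giventalKernel] at hη

lemma lintegral_enorm_baxterKernel_mul_giventalMajorant (θ : ℂ) (α : Fin n → ℂ) (u : Fin n → ℝ) :
    ∫⁻ V, ‖baxterKernel θ u V‖ₑ * giventalMajorant α V =
      (∏ j, ∫⁻ x, ‖gammaKernel (θ + α j) x‖ₑ) * giventalMajorant α u := by
  induction n with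
  | zero => simp [baxterKernel, baxterPotential, giventalMajorant, volume_pi]
  | succ n ih =>
    have hm : Measurable fun w => (∫⁻ v, ‖giventalKernel (α 0) u v‖ₑ * ‖baxterKernel θ v w‖ₑ) *
        giventalMajorant (Fin.tail α) w :=
      (Measurable.lintegral_prod_left
        (f := fun v w => ‖giventalKernel (α 0) u v‖ₑ * ‖baxterKernel θ v w‖ₑ)
        (by fun_prop)).mul (by fun_prop)
    simp only [giventalMajorant]
    rw [lintegral_mul_lintegral_mul (by fun_prop) (by fun_prop) (by fun_prop)]
    simp only [lintegral_enorm_baxterKernel_mul_giventalKernel, mul_assoc]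
    rw [lintegral_const_mul _ hm, ← lintegral_mul_lintegral_mul (by fun_prop) (by fun_prop)
      (by fun_prop)]
    simp only [ih, mul_left_comm _ (∏ _, _)]
    rw [lintegral_const_mul _ (by fun_prop), Fin.prod_univ_succ, mul_assoc]
    rfl

lemma prod_lintegral_enorm_gammaKernel_ne_top {c : Fin n → ℂ} (hc : ∀ j, 0 < (c j).re) :
    ∏ j, ∫⁻ x, ‖gammaKernel (c j) x‖ₑ ≠ ∞ :=
  ENNReal.prod_ne_top fun j _ => lintegral_enorm_gammaKernel_ne_top (hc j)

lemma integral_baxterKernel_mul_givental {θ : ℂ} {α : Fin n → ℂ} {u : Fin n → ℝ}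
    (hθ : ∀ j, 0 < (θ + α j).re) (hu : giventalMajorant α u ≠ ∞) :
    ∫ V, baxterKernel θ u V * givental α V = (∏ j, Gamma (θ + α j)) * givental α u := by
  induction n with
  | zero => simp [baxterKernel, baxterPotential, givental, volume_pi, measureReal_def]
  | succ n ih =>
    have hθ_tail : ∀ j, 0 < (θ + Fin.tail α j).re := fun j => hθ j.succ
    have hfin : ∫⁻ V, ‖baxterKernel θ u V‖ₑ *
        ∫⁻ w, ‖giventalKernel (α 0) V w‖ₑ * giventalMajorant (Fin.tail α) w ≠ ∞ := by
      refine (lintegral_enorm_baxterKernel_mul_giventalMajorant θ α u).trans_ne ?_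
      exact ENNReal.mul_ne_top (prod_lintegral_enorm_gammaKernel_ne_top hθ) hu
    have hfin_exchanged : ∫⁻ v, ‖giventalKernel (α 0) u v‖ₑ *
        ∫⁻ w, ‖baxterKernel θ v w‖ₑ * giventalMajorant (Fin.tail α) w ≠ ∞ := by
      simp only [lintegral_enorm_baxterKernel_mul_giventalMajorant, mul_left_comm _ (∏ _, _)]
      rw [lintegral_const_mul _ (by fun_prop)]
      exact ENNReal.mul_ne_top (prod_lintegral_enorm_gammaKernel_ne_top hθ_tail) hu
    calc ∫ V, baxterKernel θ u V * ∫ w, giventalKernel (α 0) V w * givental (Fin.tail α) w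
      _ = ∫ w, (∫ V, baxterKernel θ u V * giventalKernel (α 0) V w) * givental (Fin.tail α) w :=
        integral_mul_integral_mul (by fun_prop) (by fun_prop)
          (by fun_prop) (fun _ => le_rfl) (enorm_givental_le _) hfin
      _ = Gamma (θ + α 0) * ∫ w, (∫ v, giventalKernel (α 0) u v * baxterKernel θ v w) *
            givental (Fin.tail α) w := by
        simp only [integral_baxterKernel_mul_giventalKernel u _ (hθ 0), mul_assoc,
          integral_const_mul]
      _ = Gamma (θ + α 0) * ∫ v, giventalKernel (α 0) u v *
            ∫ w, baxterKernel θ v w * givental (Fin.tail α) w := by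
        rw [integral_mul_integral_mul (by fun_prop) (by fun_prop)
          (by fun_prop) (fun _ => le_rfl) (enorm_givental_le _) hfin_exchanged]
      _ = Gamma (θ + α 0) * ∫ v, (∏ j, Gamma (θ + Fin.tail α j)) *
            (giventalKernel (α 0) u v * givental (Fin.tail α) v) := by
        congr 1
        refine integral_congr_ae ?_
        filter_upwards [ae_giventalMajorant_tail_ne_top hu] with v hv
        rw [ih hθ_tail hv, mul_left_comm]
      _ = (∏ j, Gamma (θ + α j)) * givental α u := by
        rw [integral_const_mul, Fin.prod_univ_succ, mul_assoc]
        rfl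

lemma givental_add_const (α : Fin n → ℂ) (c : ℂ) (ξ : Fin n → ℝ) :
    givental (fun j => α j + c) ξ = detWeight c ξ * givental α ξ := by
  induction n with
  | zero => simp [givental, detWeight]
  | succ n ih =>
    simp only [givental]
    rw [← integral_const_mul]
    refine integral_congr_ae (.of_forall fun η => ?_)
    have htail : Fin.tail (fun j => α j + c) = fun j => Fin.tail α j + c := rfl
    simp only [htail, ih, ← mul_assoc, giventalKernel, detWeight, ← Complex.exp_add]
    congr 2
    push_cast
    ring

end Givental

section LogZeta

variable {n : ℕ}

/-- The `GL_n × GL_n` zeta integral in logarithmic coordinates, without its power of `π`. -/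
def zetaSelf (θ : ℂ) (α α' : Fin n → ℂ) : ℂ :=
  ∫ ξ, gaussianDetWeight θ ξ * (givental α ξ * givental α' ξ)

/-- The `GL_{n+1} × GL_n` zeta integral in logarithmic coordinates, without its power of `π`. -/
def zetaSucc (θ : ℂ) (α : Fin (n + 1) → ℂ) (α' : Fin n → ℂ) : ℂ :=
  ∫ V, detWeight θ V * (givental α (appendZero V) * givental α' V)

/-- The analogue of `zetaSelf` for `giventalMajorant`. -/
def zetaSelfMajorant (θ : ℂ) (α α' : Fin n → ℂ) : ℝ≥0∞ :=
  ∫⁻ ξ, ‖gaussianDetWeight θ ξ‖ₑ * (giventalMajorant α ξ * giventalMajorant α' ξ)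

/-- The analogue of `zetaSucc` for `giventalMajorant`. -/
def zetaSuccMajorant (θ : ℂ) (α : Fin (n + 1) → ℂ) (α' : Fin n → ℂ) : ℝ≥0∞ :=
  ∫⁻ V, ‖detWeight θ V‖ₑ * (giventalMajorant α (appendZero V) * giventalMajorant α' V)

lemma zetaSelfMajorant_eq_lintegral (θ : ℂ) (α α' : Fin (n + 1) → ℂ) :
    zetaSelfMajorant θ α α' =
      ∫⁻ ξ, ‖gaussianDetWeight θ ξ‖ₑ * giventalMajorant α ξ *
        ∫⁻ η, ‖giventalKernel (α' 0) ξ η‖ₑ * giventalMajorant (Fin.tail α') η := by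
  simp only [zetaSelfMajorant, mul_assoc]
  rfl

lemma zetaSuccMajorant_eq_lintegral (θ : ℂ) (α : Fin (n + 1) → ℂ) (α' : Fin n → ℂ) :
    zetaSuccMajorant θ α α' =
      ∫⁻ V, ‖detWeight θ V‖ₑ * giventalMajorant α' V *
        ∫⁻ w, ‖giventalKernel (α 0) (appendZero V) w‖ₑ * giventalMajorant (Fin.tail α) w := by
  simp only [zetaSuccMajorant, mul_comm (giventalMajorant α _), mul_assoc]
  rfl

lemma zetaSelfMajorant_succ (θ : ℂ) (α α' : Fin (n + 1) → ℂ) :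
    zetaSelfMajorant θ α α' = (∏ i, ∫⁻ x, ‖gammaKernel (θ + α' 0 + α i) x‖ₑ) *
      zetaSuccMajorant θ α (Fin.tail α') := by
  rw [zetaSelfMajorant_eq_lintegral, lintegral_mul_lintegral_of_intertwine
    (q := fun η => ‖detWeight θ η‖ₑ)
    (l := fun η ξ => ‖baxterKernel (θ + α' 0) (appendZero η) ξ‖ₑ)
    (fun ξ η => by simp only [← enorm_mul, gaussianDetWeight_mul_giventalKernel])
    (by fun_prop) (by fun_prop) (by fun_prop) (by fun_prop) (by fun_prop)]
  simp only [lintegral_enorm_baxterKernel_mul_giventalMajorant, mul_assoc,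
    mul_left_comm _ (∏ _, _)]
  rw [lintegral_const_mul _ (by fun_prop)]
  rfl

lemma zetaSuccMajorant_eq (θ : ℂ) (α : Fin (n + 1) → ℂ) (α' : Fin n → ℂ) :
    zetaSuccMajorant θ α α' = (∏ j, ∫⁻ x, ‖gammaKernel (θ + α 0 + α' j) x‖ₑ) *
      zetaSelfMajorant θ (Fin.tail α) α' := by
  rw [zetaSuccMajorant_eq_lintegral, lintegral_mul_lintegral_of_intertwine
    (q := fun w => ‖gaussianDetWeight θ w‖ₑ) (l := fun w V => ‖baxterKernel (θ + α 0) w V‖ₑ)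
    (fun V w => by simp only [← enorm_mul, detWeight_mul_giventalKernel])
    (by fun_prop) (by fun_prop) (by fun_prop) (by fun_prop) (by fun_prop)]
  simp only [lintegral_enorm_baxterKernel_mul_giventalMajorant, mul_assoc,
    mul_left_comm _ (∏ _, _)]
  rw [lintegral_const_mul _ (by fun_prop), zetaSelfMajorant]
  simp only [mul_comm (giventalMajorant (Fin.tail α) _)]

lemma zetaSelfMajorant_ne_top {θ : ℂ} {α α' : Fin n → ℂ}
    (h : ∀ i j, 0 < (θ + α i + α' j).re) : zetaSelfMajorant θ α α' ≠ ∞ := by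
  induction n with
  | zero =>
    simp [zetaSelfMajorant, gaussianDetWeight, gaussianPotential, giventalMajorant, volume_pi]
  | succ n ih =>
    rw [zetaSelfMajorant_succ, zetaSuccMajorant_eq]
    refine ENNReal.mul_ne_top ?_ (ENNReal.mul_ne_top ?_ (ih fun i j => h i.succ j.succ))
    · exact prod_lintegral_enorm_gammaKernel_ne_top fun i => by
        simpa only [add_right_comm] using h i 0
    · exact prod_lintegral_enorm_gammaKernel_ne_top fun j => h 0 j.succ

lemma zetaSuccMajorant_ne_top {θ : ℂ} {α : Fin (n + 1) → ℂ} {α' : Fin n → ℂ}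
    (h : ∀ i j, 0 < (θ + α i + α' j).re) : zetaSuccMajorant θ α α' ≠ ∞ := by
  rw [zetaSuccMajorant_eq]
  exact ENNReal.mul_ne_top (prod_lintegral_enorm_gammaKernel_ne_top fun j => h 0 j)
    (zetaSelfMajorant_ne_top fun i j => h i.succ j)

lemma ae_giventalMajorant_appendZero_ne_top {θ : ℂ} {α : Fin (n + 1) → ℂ} {α' : Fin n → ℂ}
    (h : zetaSuccMajorant θ α α' ≠ ∞) : ∀ᵐ V, giventalMajorant α (appendZero V) ≠ ∞ := by
  filter_upwards [ae_lt_top (by fun_prop) h] with V hV htop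
  simp [htop, ENNReal.top_mul, ENNReal.mul_top, giventalMajorant_ne_zero, detWeight] at hV

lemma ae_giventalMajorant_ne_top {θ : ℂ} {α α' : Fin n → ℂ}
    (h : zetaSelfMajorant θ α α' ≠ ∞) : ∀ᵐ ξ, giventalMajorant α' ξ ≠ ∞ := by
  filter_upwards [ae_lt_top (by fun_prop) h] with ξ hξ htop
  simp [htop, ENNReal.mul_top, giventalMajorant_ne_zero, gaussianDetWeight] at hξ

lemma zetaSelf_succ {θ : ℂ} {α α' : Fin (n + 1) → ℂ} (h : ∀ i j, 0 < (θ + α i + α' j).re) :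
    zetaSelf θ α α' = (∏ i, Gamma (θ + α' 0 + α i)) * zetaSucc θ α (Fin.tail α') := by
  have hfin := zetaSelfMajorant_ne_top h
  have hfin_succ : zetaSuccMajorant θ α (Fin.tail α') ≠ ∞ :=
    zetaSuccMajorant_ne_top fun i j => h i j.succ
  have h_zero (i : Fin (n + 1)) : 0 < (θ + α' 0 + α i).re := by
    simpa only [add_right_comm] using h i 0
  rw [zetaSelfMajorant_eq_lintegral] at hfin
  calc zetaSelf θ α α'
    _ = ∫ ξ, gaussianDetWeight θ ξ * givental α ξ *
          ∫ η, giventalKernel (α' 0) ξ η * givental (Fin.tail α') η := by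
      simp only [zetaSelf, mul_assoc]
      rfl
    _ = ∫ η, detWeight θ η * (∫ ξ, baxterKernel (θ + α' 0) (appendZero η) ξ * givental α ξ) *
          givental (Fin.tail α') η :=
      integral_mul_integral_of_intertwine (gaussianDetWeight_mul_giventalKernel θ _)
        (by fun_prop) (by fun_prop) (by fun_prop) (by fun_prop) (enorm_givental_le _)
        (enorm_givental_le _) hfin
    _ = ∫ η, (∏ i, Gamma (θ + α' 0 + α i)) *
          (detWeight θ η * (givental α (appendZero η) * givental (Fin.tail α') η)) := by
      refine integral_congr_ae ?_
      filter_upwards [ae_giventalMajorant_appendZero_ne_top hfin_succ] with η hη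
      rw [integral_baxterKernel_mul_givental h_zero hη]
      ring
    _ = _ := integral_const_mul _ _

lemma zetaSucc_eq {θ : ℂ} {α : Fin (n + 1) → ℂ} {α' : Fin n → ℂ}
    (h : ∀ i j, 0 < (θ + α i + α' j).re) :
    zetaSucc θ α α' = (∏ j, Gamma (θ + α 0 + α' j)) * zetaSelf θ (Fin.tail α) α' := by
  have hfin := zetaSuccMajorant_ne_top h
  have hfin_self : zetaSelfMajorant θ (Fin.tail α) α' ≠ ∞ :=
    zetaSelfMajorant_ne_top fun i j => h i.succ j
  rw [zetaSuccMajorant_eq_lintegral] at hfin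
  calc zetaSucc θ α α'
    _ = ∫ V, detWeight θ V * givental α' V *
          ∫ w, giventalKernel (α 0) (appendZero V) w * givental (Fin.tail α) w := by
      simp only [zetaSucc, mul_comm (givental α _), mul_assoc]
      rfl
    _ = ∫ w, gaussianDetWeight θ w * (∫ V, baxterKernel (θ + α 0) w V * givental α' V) *
          givental (Fin.tail α) w :=
      integral_mul_integral_of_intertwine (detWeight_mul_giventalKernel θ _)
        (by fun_prop) (by fun_prop) (by fun_prop) (by fun_prop) (enorm_givental_le _)
        (enorm_givental_le _) hfin
    _ = ∫ w, (∏ j, Gamma (θ + α 0 + α' j)) *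
          (gaussianDetWeight θ w * (givental (Fin.tail α) w * givental α' w)) := by
      refine integral_congr_ae ?_
      filter_upwards [ae_giventalMajorant_ne_top hfin_self] with w hw
      rw [integral_baxterKernel_mul_givental (h 0) hw]
      ring
    _ = _ := integral_const_mul _ _

lemma detWeight_add (θ c : ℂ) (ξ : Fin n → ℝ) :
    detWeight (θ + c) ξ = detWeight θ ξ * detWeight c ξ := by
  simp only [detWeight, ← Complex.exp_add]
  ring_nf

lemma gaussianDetWeight_add (θ c : ℂ) (ξ : Fin n → ℝ) :
    gaussianDetWeight (θ + c) ξ = gaussianDetWeight θ ξ * detWeight c ξ := by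
  simp only [gaussianDetWeight, detWeight, ← Complex.exp_add]
  ring_nf

lemma zetaSucc_add_const (θ c : ℂ) (α : Fin (n + 1) → ℂ) (α' : Fin n → ℂ) :
    zetaSucc θ α (fun j => α' j + c) = zetaSucc (θ + c) α α' := by
  refine integral_congr_ae (.of_forall fun V => ?_)
  simp only [givental_add_const, detWeight_add]
  ring

lemma zetaSelf_add_const (θ c : ℂ) (α α' : Fin n → ℂ) :
    zetaSelf θ (fun j => α j + c) α' = zetaSelf (θ + c) α α' := by
  refine integral_congr_ae (.of_forall fun ξ => ?_)
  simp only [givental_add_const, gaussianDetWeight_add]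
  ring

end LogZeta

section Whittaker

/-- The half parameters of the Whittaker function `WhittAr n a`, which are the natural parameters
of its Givental integral. -/
def halfParams (n : ℕ) (a : ℕ → ℂ) : Fin n → ℂ := fun j => a j / 2

lemma halfParams_tildeA (m : ℕ) (a : ℕ → ℂ) :
    halfParams (m + 1) (tildeA (m + 2) a) =
      fun j => Fin.tail (halfParams (m + 2) a) j + a 0 / (m + 1) / 2 := by
  funext j
  simp only [halfParams, tildeA, Fin.tail, Fin.val_succ]
  push_cast
  ring_nf

lemma sumA_tildeA (m : ℕ) (a : ℕ → ℂ) : sumA (m + 1) (tildeA (m + 2) a) = sumA (m + 2) a := by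
  have hm : (m + 1 : ℂ) ≠ 0 := by exact_mod_cast m.succ_ne_zero
  have hcast : ((m + 2 : ℕ) : ℂ) - 1 = m + 1 := by
    push_cast
    ring
  rw [sumA, sumA, Finset.sum_range_succ' _ (m + 1)]
  simp only [tildeA, hcast, Finset.sum_add_distrib, Finset.sum_const, Finset.card_range,
    nsmul_eq_mul]
  push_cast
  field_simp

lemma extR_val {k : ℕ} (t : Fin k → ℝ) (j : Fin k) : extR t j = t j := by simp [extR]

lemma extR_last {k : ℕ} (t : Fin (k + 1) → ℝ) : extR t k = t (Fin.last k) :=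
  extR_val t (Fin.last k)

lemma extR_eq_one {k : ℕ} (t : Fin k → ℝ) : extR t k = 1 := by simp [extR]

lemma sum_succ_mul_sub {n : ℕ} (ξ : Fin (n + 1) → ℝ) :
    ∑ j : Fin n, ((j : ℝ) + 1) * (ξ j.succ - ξ j.castSucc) =
      (n + 1) * ξ (Fin.last n) - ∑ j, ξ j := by
  induction n with
  | zero => simp
  | succ n ih =>
    have h := ih fun j => ξ j.castSucc
    rw [Fin.sum_univ_castSucc, Fin.sum_univ_castSucc (f := ξ)]
    simp only [Fin.val_castSucc, Fin.succ_castSucc, Fin.val_last, Fin.succ_last] at h ⊢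
    rw [h]
    push_cast
    ring

lemma sum_sub_mul_sub {n : ℕ} (ξ : Fin (n + 1) → ℝ) :
    ∑ j : Fin n, ((n : ℝ) - j) * (ξ j.succ - ξ j.castSucc) = ∑ j, ξ j - (n + 1) * ξ 0 := by
  have htelescope : ∑ j : Fin n, (ξ j.succ - ξ j.castSucc) = ξ (Fin.last n) - ξ 0 := by
    rw [Finset.sum_sub_distrib]
    linarith [Fin.sum_univ_succ ξ, Fin.sum_univ_castSucc ξ]
  have hsplit (j : Fin n) : ((n : ℝ) - j) * (ξ j.succ - ξ j.castSucc) =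
      (n + 1) * (ξ j.succ - ξ j.castSucc) - (j + 1) * (ξ j.succ - ξ j.castSucc) := by ring
  rw [Finset.sum_congr rfl fun j _ => hsplit j, Finset.sum_sub_distrib, ← Finset.mul_sum,
    htelescope, sum_succ_mul_sub]
  ring

/-- The logarithms of the values of the simple roots, scaled by `π`, on the torus: a point with
logarithmic coordinates `ξ` has `π * yⱼ = exp (rootLog ξ j)`. -/
def rootLog {n : ℕ} (ξ : Fin (n + 1) → ℝ) (j : Fin n) : ℝ := (ξ j.succ - ξ j.castSucc) / 2

lemma integral_fin_one (f : (Fin 1 → ℝ) → ℂ) : ∫ η, f η = ∫ x : ℝ, f fun _ => x :=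
  ((volume_preserving_funUnique (Fin 1) ℝ).symm.integral_comp' f).symm

lemma besselK_two_mul_exp (ν : ℂ) (b : ℝ) :
    BesselK ν (2 * rexp b) =
      1 / 2 * ∫ x : ℝ, cexp (ν * x - (rexp (x + b) + rexp (b - x) : ℝ)) := by
  rw [BesselK, setIntegral_Ioi_eq_integral_exp]
  congr 2 with x
  have hx : (rexp x : ℂ) ≠ 0 := by exact_mod_cast (Real.exp_pos x).ne'
  rw [mul_div_cancel₀ _ hx, ofReal_exp_cpow, ← Complex.exp_add, Real.exp_add, Real.exp_sub]
  congr 1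
  push_cast
  field_simp
  ring

lemma givental_one (α : Fin 1 → ℂ) (η : Fin 1 → ℝ) : givental α η = cexp (-(α 0 * η 0)) := by
  simp [givental, giventalKernel, giventalPotential, volume_pi, measureReal_def]

lemma givental_two (α : Fin 2 → ℂ) (ξ : Fin 2 → ℝ) :
    givental α ξ = 2 * cexp (-(α 0 + α 1) * ((ξ 0 + ξ 1) / 2 : ℝ)) *
      BesselK (α 0 - α 1) (2 * rexp (rootLog ξ 0)) := by
  have hleft (x : ℝ) : x + (ξ 0 + ξ 1) / 2 - ξ 0 = x + rootLog ξ 0 := by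
    simp only [rootLog, Fin.succ_zero_eq_one, Fin.castSucc_zero]
    ring
  have hright (x : ℝ) : ξ 1 - (x + (ξ 0 + ξ 1) / 2) = rootLog ξ 0 - x := by
    simp only [rootLog, Fin.succ_zero_eq_one, Fin.castSucc_zero]
    ring
  have hsum : ∑ j, ξ j = ξ 0 + ξ 1 := Fin.sum_univ_two ξ
  rw [givental, integral_fin_one, ← integral_add_right_eq_self _ ((ξ 0 + ξ 1) / 2),
    besselK_two_mul_exp, ← mul_assoc, ← integral_const_mul]
  congr 1 with x
  simp only [givental_one, giventalKernel, giventalPotential, hsum, Fin.tail, Fin.sum_univ_one,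
    Fin.castSucc_zero, Fin.succ_zero_eq_one, hleft, hright]
  rw [mul_right_comm (2 : ℂ), mul_one_div_cancel two_ne_zero, one_mul, ← Complex.exp_add,
    ← Complex.exp_add]
  congr 1
  push_cast
  ring

lemma whittAr_two (a : ℕ → ℂ) {ξ : Fin 2 → ℝ} {y : ℕ → ℝ} (hy : π * y 0 = rexp (rootLog ξ 0)) :
    WhittAr 2 a y =
      cexp (sumA 2 a / 2 * (ξ 1 - Real.log π : ℝ)) * givental (halfParams 2 a) ξ := by
  have hy_exp : y 0 = rexp (rootLog ξ 0 - Real.log π) := by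
    rw [Real.exp_sub, Real.exp_log Real.pi_pos, ← hy, mul_div_cancel_left₀ _ Real.pi_ne_zero]
  rw [WhittAr, givental_two, mul_assoc 2 π, hy, hy_exp, ofReal_exp_cpow, ← mul_assoc,
    mul_left_comm _ (2 : ℂ), ← Complex.exp_add]
  simp only [halfParams, sumA, Finset.sum_range_succ, Finset.sum_range_zero, Fin.val_zero,
    Fin.val_one, rootLog, Fin.succ_zero_eq_one, Fin.castSucc_zero]
  push_cast
  ring_nf

lemma setIntegral_posSet {k : ℕ} (f : (Fin k → ℝ) → ℂ) :
    ∫ y in posSet k, f y =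
      ∫ x : Fin k → ℝ, (∏ j, (rexp (x j) : ℂ)) * f fun j => rexp (x j) := by
  have hrange : posSet k = (fun (x : Fin k → ℝ) j => rexp (x j)) '' Set.univ := by
    ext y
    simp only [posSet, Set.mem_ofPred_eq, Set.image_univ, Set.mem_range]
    refine ⟨fun h => ⟨fun j => Real.log (y j), funext fun j => Real.exp_log (h j)⟩, ?_⟩
    rintro ⟨x, rfl⟩ j
    exact Real.exp_pos _
  have hderiv : ∀ x ∈ Set.univ, HasFDerivWithinAt (fun (x : Fin k → ℝ) j => rexp (x j))
      (.pi fun j => (rexp (x j) • .id ℝ ℝ : ℝ →L[ℝ] ℝ).comp (.proj j)) Set.univ x :=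
    fun x _ => hasFDerivWithinAt_pi.2 fun j =>
      ((hasFDerivAt_apply (𝕜 := ℝ) j x).exp.congr_fderiv (by ext; simp)).hasFDerivWithinAt
  rw [hrange, integral_image_eq_integral_abs_det_fderiv_smul volume MeasurableSet.univ hderiv
    (fun x _ y _ h => funext fun j => Real.exp_injective (congrFun h j)), setIntegral_univ]
  refine integral_congr_ae (.of_forall fun x => ?_)
  beta_reduce
  rw [ContinuousLinearMap.det_pi, Finset.abs_prod]
  simp [abs_of_pos (Real.exp_pos _), ContinuousLinearMap.det]

lemma cexp_mul_cpow_mul_cpow (x x' e : ℝ) (A B : ℂ) :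
    cexp ((-rexp ((x' - x) / 2) ^ 2 * rexp (e - x') - 1 / rexp (e - x') : ℝ)) *
        (rexp ((x' - x) / 2) : ℂ) ^ A * (rexp (e - x') : ℂ) ^ B =
      cexp (A * ((x' - x) / 2) + B * (e - x') - (rexp (e - x) + rexp (x' - e) : ℝ)) := by
  have hleft : rexp ((x' - x) / 2) ^ 2 * rexp (e - x') = rexp (e - x) := by
    rw [← Real.exp_nat_mul, ← Real.exp_add]
    push_cast
    ring_nf
  rw [neg_mul, hleft, one_div, ← Real.exp_neg, neg_sub, ofReal_exp_cpow, ofReal_exp_cpow,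
    ← Complex.exp_add, ← Complex.exp_add]
  congr 1
  push_cast
  ring

/-- The product over `j` in the definition of `WhittAr (n + 1)`, with `π * yⱼ = exp (rootLog ξ j)`
and `tⱼ = exp (ηⱼ - ξⱼ₊₁)`. -/
def whittArWeight {n : ℕ} (c : ℂ) (ξ : Fin (n + 1) → ℝ) (η : Fin n → ℝ) : ℂ :=
  ∏ j, (cexp ((-rexp (rootLog ξ j) ^ 2 * rexp (η j - ξ j.succ) - 1 / rexp (η j - ξ j.succ) : ℝ)) *
    (rexp (rootLog ξ j) : ℂ) ^ ((n - j : ℕ) * c / n) *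
    (rexp (η j - ξ j.succ) : ℂ) ^ ((n + 1 : ℕ) * c / (2 * n)))

lemma detWeight_mul_whittArWeight {n : ℕ} (hn : n ≠ 0) (c : ℂ) (ξ : Fin (n + 1) → ℝ)
    (η : Fin n → ℝ) :
    detWeight (c / n / 2) η * whittArWeight c ξ η = giventalKernel (c / 2) ξ η := by
  have hn' : (n : ℂ) ≠ 0 := Nat.cast_ne_zero.2 hn
  have hξ := Fin.sum_univ_succ fun j => (ξ j : ℂ)
  have hsum := congrArg ((↑) : ℝ → ℂ) (sum_sub_mul_sub ξ)
  have hfactor (j : Fin n) : ((n - j : ℕ) : ℂ) * c / n * ((ξ j.succ - ξ j.castSucc) / 2) =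
      c / (2 * n) * ((n - j) * (ξ j.succ - ξ j.castSucc)) := by
    rw [Nat.cast_sub j.is_lt.le]
    ring
  simp only [whittArWeight, rootLog, cexp_mul_cpow_mul_cpow, ← Complex.exp_sum]
  rw [detWeight, giventalKernel, giventalPotential, ← Complex.exp_add]
  congr 1
  push_cast at hsum ⊢
  simp only [Finset.sum_sub_distrib, Finset.sum_add_distrib, hfactor, ← Finset.mul_sum] at hsum ⊢
  rw [hsum, hξ]
  field_simp
  ring

lemma whittAr_add_three {k : ℕ} (a : ℕ → ℂ) {ξ : Fin (k + 3) → ℝ} {y : ℕ → ℝ}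
    (hy : ∀ j : Fin (k + 2), π * y j = rexp (rootLog ξ j)) :
    WhittAr (k + 3) a y = ∫ η : Fin (k + 2) → ℝ,
      cexp (-sumA (k + 3) a / 2 * (Real.log π + (η (Fin.last _) - ξ (Fin.last _)) : ℝ)) *
        (WhittAr (k + 2) (tildeA (k + 3) a) (fun j => y (j + 1) *
            √(extR (fun i => rexp (η i - ξ i.succ)) (j + 1) /
              extR (fun i => rexp (η i - ξ i.succ)) j)) *
          whittArWeight (a 0) ξ η) := by
  rw [WhittAr, setIntegral_posSet,
    ← integral_sub_right_eq_self _ (fun j : Fin (k + 2) => ξ j.succ)]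
  congr 1 with η
  have hprod : ∏ j : Fin (k + 2), (rexp (η j - ξ j.succ) : ℂ) ≠ 0 :=
    Finset.prod_ne_zero_iff.2 fun j _ => by exact_mod_cast (Real.exp_pos _).ne'
  have hlast : π * extR (fun i : Fin (k + 2) => rexp (η i - ξ i.succ)) (k + 1) =
      rexp (Real.log π + (η (Fin.last _) - ξ (Fin.last _))) := by
    rw [extR_last, Real.exp_add, Real.exp_log Real.pi_pos, Fin.succ_last]
  simp only [whittArWeight, Pi.sub_apply, hlast, ofReal_exp_cpow, Finset.prod_range, extR_val, hy]
  rw [mul_comm, inv_mul_cancel_right₀ hprod, mul_comm]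

lemma pi_mul_sqrt_extR_div_extR {k : ℕ} {ξ : Fin (k + 2) → ℝ} {y : ℕ → ℝ}
    (hy : ∀ j : Fin (k + 1), π * y j = rexp (rootLog ξ j)) (η : Fin (k + 1) → ℝ) (j : Fin k) :
    π * (y (j + 1) * √(extR (fun i => rexp (η i - ξ i.succ)) (j + 1) /
      extR (fun i => rexp (η i - ξ i.succ)) j)) = rexp (rootLog η j) := by
  have hsucc := extR_val (fun i => rexp (η i - ξ i.succ)) j.succ
  have hcast := extR_val (fun i => rexp (η i - ξ i.succ)) j.castSucc
  rw [Fin.val_succ] at hsucc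
  rw [Fin.val_castSucc] at hcast
  rw [hsucc, hcast, ← Real.exp_sub, ← Real.exp_half, ← mul_assoc, ← Fin.val_succ, hy j.succ,
    ← Real.exp_add, rootLog, rootLog, Fin.succ_castSucc]
  ring_nf

lemma whittAr_eq_givental (m : ℕ) (a : ℕ → ℂ) {ξ : Fin (m + 1) → ℝ} {y : ℕ → ℝ}
    (hy : ∀ j : Fin m, π * y j = rexp (rootLog ξ j)) :
    WhittAr (m + 1) a y =
      cexp (sumA (m + 1) a / 2 * (ξ (Fin.last m) - m * Real.log π : ℝ)) *
        givental (halfParams (m + 1) a) ξ := by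
  match m with
  | 0 => simp [WhittAr, givental_one, halfParams, sumA, ← Complex.exp_add, div_mul_eq_mul_div]
  | 1 => simpa using whittAr_two a (hy 0)
  | k + 2 =>
    rw [whittAr_add_three a hy, givental, ← integral_const_mul]
    congr 1 with η
    have hparams : givental (halfParams (k + 2) (tildeA (k + 3) a)) η =
        detWeight (a 0 / (k + 2 : ℕ) / 2) η * givental (Fin.tail (halfParams (k + 3) a)) η := by
      rw [halfParams_tildeA, givental_add_const]
      push_cast
      ring_nf
    have hkernel : giventalKernel (halfParams (k + 3) a 0) ξ η =
        detWeight (a 0 / (k + 2 : ℕ) / 2) η * whittArWeight (a 0) ξ η :=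
      (detWeight_mul_whittArWeight (k + 1).succ_ne_zero (a 0) ξ η).symm
    have hexp : cexp (sumA (k + 3) a / 2 * (ξ (Fin.last _) - (k + 2 : ℕ) * Real.log π : ℝ)) =
        cexp (-sumA (k + 3) a / 2 * (Real.log π + (η (Fin.last _) - ξ (Fin.last _)) : ℝ)) *
          cexp (sumA (k + 3) a / 2 * (η (Fin.last _) - (k + 1 : ℕ) * Real.log π : ℝ)) := by
      rw [← Complex.exp_add]
      push_cast
      ring_nf
    rw [whittAr_eq_givental (k + 1) _ (pi_mul_sqrt_extR_div_extR hy η), sumA_tildeA, hparams,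
      hkernel, hexp]
    ring

end Whittaker

section Torus

lemma appendZero_add {n : ℕ} (V W : Fin n → ℝ) :
    appendZero (V + W) = appendZero V + appendZero W := by
  funext j
  induction j using Fin.lastCases <;> simp

lemma appendZero_smul {n : ℕ} (c : ℝ) (V : Fin n → ℝ) :
    appendZero (c • V) = c • appendZero V := by
  funext j
  induction j using Fin.lastCases <;> simp

lemma appendZero_single_of_ne {n : ℕ} {j : Fin n} {k : Fin (n + 1)} (h : k ≠ j.castSucc) (x : ℝ) :
    appendZero (Pi.single j x) k = 0 := by
  induction k using Fin.lastCases with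
  | last => simp
  | cast k => simp [show k ≠ j by simpa using h]

/-- The linear map from logarithmic coordinates `ξ` on the torus of `GL_n` to the logarithms of the
torus coordinates `y₁, …, yₙ`, up to translation. -/
def torusLog (n : ℕ) : (Fin n → ℝ) →ₗ[ℝ] (Fin n → ℝ) where
  toFun ξ := rootLog (appendZero ξ)
  map_add' ξ η := by
    funext j
    simp only [rootLog, appendZero_add, Pi.add_apply]
    ring
  map_smul' c ξ := by
    funext j
    simp only [rootLog, appendZero_smul, Pi.smul_apply, smul_eq_mul, RingHom.id_apply]
    ring

lemma torusLog_apply {n : ℕ} (ξ : Fin n → ℝ) : torusLog n ξ = rootLog (appendZero ξ) := rfl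

lemma det_torusLog (n : ℕ) : LinearMap.det (torusLog n) = (-1 / 2) ^ n := by
  have hsucc {i j : Fin n} (hij : j ≤ i) : i.succ ≠ j.castSucc :=
    (Fin.castSucc_lt_succ_iff.2 hij).ne'
  rw [← LinearMap.det_toMatrix', Matrix.det_of_isUpperTriangular]
  · simp [LinearMap.toMatrix'_apply, torusLog_apply, rootLog,
      appendZero_single_of_ne (hsucc le_rfl), div_pow]
  · intro i j hij
    have hij : j < i := hij
    simp [LinearMap.toMatrix'_apply, torusLog_apply, rootLog,
      appendZero_single_of_ne (hsucc hij.le), hij.ne']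

lemma two_pow_mul_integral_eq {n : ℕ} (f : (Fin n → ℝ) → ℂ) (c : Fin n → ℝ) :
    2 ^ n * ∫ x, f x = ∫ ξ, f (torusLog n ξ + c) := by
  have hdet : LinearMap.det (torusLog n) ≠ 0 := by
    rw [det_torusLog]
    exact pow_ne_zero _ (by norm_num)
  have hemb : MeasurableEmbedding (torusLog n) :=
    ((torusLog n).equivOfDetNeZero hdet).toContinuousLinearEquiv.toHomeomorph.measurableEmbedding
  rw [← hemb.integral_map (fun x => f (x + c)),
    Real.map_linearMap_volume_pi_eq_smul_volume_pi hdet, integral_smul_measure,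
    integral_add_right_eq_self, det_torusLog]
  simp [abs_inv, abs_pow, abs_div]

lemma sum_succ_mul_torusLog {n : ℕ} (ξ : Fin n → ℝ) :
    ∑ j : Fin n, ((j : ℝ) + 1) * torusLog n ξ j = -(∑ j, ξ j) / 2 := by
  have h := sum_succ_mul_sub (appendZero ξ)
  rw [appendZero_last, sum_appendZero, mul_zero, zero_sub] at h
  simp only [torusLog_apply, rootLog, ← mul_div_assoc, ← Finset.sum_div, h]

/-- The translation in the logarithms of the torus coordinates: it absorbs the factors `π` at the
simple roots, and a factor `exp d` at the last coordinate. -/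
def torusShift (m : ℕ) (d : ℝ) : Fin (m + 1) → ℝ := Fin.snoc (fun _ => -Real.log π) (-d)

lemma sum_succ_mul_torusShift (m : ℕ) (d : ℝ) :
    ∑ j : Fin (m + 1), ((j : ℝ) + 1) * torusShift m d j =
      -(m * (m + 1) / 2 * Real.log π + (m + 1) * d) := by
  have hsum : ∑ j : Fin m, ((j : ℝ) + 1) = m * (m + 1) / 2 := by
    induction m with
    | zero => simp
    | succ m ih =>
      rw [Fin.sum_univ_castSucc]
      simp only [Fin.val_castSucc, Fin.val_last, ih]
      push_cast
      ring
  simp only [Fin.sum_univ_castSucc, torusShift, Fin.snoc_castSucc, Fin.snoc_last,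
    Fin.val_castSucc, Fin.val_last, ← Finset.sum_mul, hsum]
  ring

/-- The point of the torus of `GL_{m+1}` with logarithmic coordinates `ξ`, translated by
`torusShift m d`. -/
def torusPoint {m : ℕ} (d : ℝ) (ξ : Fin (m + 1) → ℝ) (j : Fin (m + 1)) : ℝ :=
  rexp (torusLog (m + 1) ξ j + torusShift m d j)

lemma extR_torusPoint_last {m : ℕ} (d : ℝ) (ξ : Fin (m + 1) → ℝ) :
    extR (torusPoint d ξ) m = rexp (-(ξ (Fin.last m) / 2 + d)) := by
  rw [extR_last]
  simp only [torusPoint, torusLog_apply, rootLog, torusShift, Fin.succ_last, appendZero_last,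
    appendZero_castSucc, Fin.snoc_last]
  ring_nf

lemma pi_mul_extR_torusPoint {m : ℕ} (d : ℝ) (ξ : Fin (m + 1) → ℝ) (j : Fin m) :
    π * extR (torusPoint d ξ) j = rexp (rootLog ξ j) := by
  have hval := extR_val (torusPoint d ξ) j.castSucc
  rw [Fin.val_castSucc] at hval
  rw [hval]
  simp only [torusPoint, torusLog_apply, rootLog, torusShift, Fin.succ_castSucc,
    appendZero_castSucc, Fin.snoc_castSucc]
  rw [← sub_eq_add_neg, Real.exp_sub, Real.exp_log Real.pi_pos, mul_div_cancel₀ _ Real.pi_ne_zero]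

lemma pi_mul_extR_torusPoint_log_pi {m : ℕ} (ξ : Fin (m + 1) → ℝ) (j : Fin (m + 1)) :
    π * extR (torusPoint (Real.log π) ξ) j = rexp (rootLog (appendZero ξ) j) := by
  have hshift : torusShift m (Real.log π) j = -Real.log π := by
    induction j using Fin.lastCases <;> simp [torusShift]
  rw [extR_val, torusPoint, hshift, torusLog_apply, ← sub_eq_add_neg, Real.exp_sub,
    Real.exp_log Real.pi_pos, mul_div_cancel₀ _ Real.pi_ne_zero]

lemma prod_exp_mul_prod_cpow_div {k : ℕ} (x : Fin k → ℝ) (s : ℂ) :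
    (∏ j, (rexp (x j) : ℂ)) * ∏ j ∈ Finset.range k,
        ((extR (fun i => rexp (x i)) j : ℝ) : ℂ) ^ (((j + 1 : ℕ) : ℂ) * s) /
          ((extR (fun i => rexp (x i)) j : ℝ) : ℂ) =
      cexp (s * (∑ j : Fin k, ((j : ℝ) + 1) * x j : ℝ)) := by
  rw [Finset.prod_range, ← Finset.prod_mul_distrib, Complex.ofReal_sum, Finset.mul_sum,
    Complex.exp_sum]
  refine Finset.prod_congr rfl fun j _ => ?_
  have hx : (rexp (x j) : ℂ) ≠ 0 := by exact_mod_cast (Real.exp_pos _).ne'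
  rw [extR_val, mul_div_cancel₀ _ hx, ofReal_exp_cpow]
  push_cast
  ring_nf

lemma setIntegral_posSet_torusPoint {m : ℕ} (d : ℝ) (s : ℂ) (G : (Fin (m + 1) → ℝ) → ℂ) :
    2 ^ (m + 1) * ∫ y in posSet (m + 1), G y * ∏ j ∈ Finset.range (m + 1),
        ((extR y j : ℝ) : ℂ) ^ (((j + 1 : ℕ) : ℂ) * s) / ((extR y j : ℝ) : ℂ) =
      cexp (-s * (m * (m + 1) / 2 * Real.log π + (m + 1) * d : ℝ)) *
        ∫ ξ, detWeight (s / 2) ξ * G (torusPoint d ξ) := by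
  rw [setIntegral_posSet]
  simp only [mul_left_comm _ (G _), prod_exp_mul_prod_cpow_div]
  rw [two_pow_mul_integral_eq _ (torusShift m d), ← integral_const_mul]
  congr 1 with ξ
  simp only [Pi.add_apply, mul_add, Finset.sum_add_distrib, sum_succ_mul_torusLog,
    sum_succ_mul_torusShift]
  rw [← mul_assoc, mul_comm, detWeight, ← Complex.exp_add]
  congr 2
  push_cast
  ring

lemma whittAhat_torusPoint {m : ℕ} (a : ℕ → ℂ) (d : ℝ) (ξ : Fin (m + 1) → ℝ) :
    WhittAhat (m + 1) a (extR (torusPoint d ξ)) =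
      cexp (-sumA (m + 1) a * (d + m / 2 * Real.log π : ℝ)) *
        givental (halfParams (m + 1) a) ξ := by
  rw [WhittAhat, whittAr_eq_givental m a (pi_mul_extR_torusPoint d ξ), Nat.add_sub_cancel,
    extR_torusPoint_last, ofReal_exp_cpow, ← mul_assoc, ← Complex.exp_add]
  congr 2
  push_cast
  ring

lemma whittAhat_succ_torusPoint {m : ℕ} (a : ℕ → ℂ) (ξ : Fin (m + 1) → ℝ) :
    WhittAhat (m + 2) a (extR (torusPoint (Real.log π) ξ)) =
      cexp (-sumA (m + 2) a * ((m + 1) / 2 * Real.log π : ℝ)) *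
        givental (halfParams (m + 2) a) (appendZero ξ) := by
  rw [WhittAhat, whittAr_eq_givental (m + 1) a (pi_mul_extR_torusPoint_log_pi ξ),
    show m + 2 - 1 = m + 1 from rfl, extR_eq_one, Complex.ofReal_one, Complex.one_cpow, one_mul,
    appendZero_last]
  congr 2
  push_cast
  ring

lemma pi_mul_extR_torusPoint_sq {m : ℕ} (ξ : Fin (m + 1) → ℝ) :
    π * extR (torusPoint (Real.log π / 2) ξ) m ^ 2 = gaussianPotential ξ := by
  have hexp : (2 : ℕ) * -(ξ (Fin.last m) / 2 + Real.log π / 2) =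
      -ξ (Fin.last m) - Real.log π := by
    push_cast
    ring
  rw [extR_torusPoint_last, ← Real.exp_nat_mul, hexp, Real.exp_sub, Real.exp_log Real.pi_pos,
    mul_div_cancel₀ _ Real.pi_ne_zero, gaussianPotential]

end Torus

section Recursion

lemma zetaGLGL_eq_zetaSelf (m : ℕ) (a a' : ℕ → ℂ) (s : ℂ) :
    zetaGLGL (m + 1) a a' s =
      cexp (-((m + 1) ^ 2 * s + (m + 1) * sumA (m + 1) a + (m + 1) * sumA (m + 1) a') / 2 *
        Real.log π) * zetaSelf (s / 2) (halfParams (m + 1) a) (halfParams (m + 1) a') := by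
  rw [zetaGLGL, setIntegral_posSet_torusPoint (Real.log π / 2), zetaSelf, ← integral_const_mul,
    ← integral_const_mul]
  congr 1 with ξ
  have hconst : cexp (-((m + 1) ^ 2 * s + (m + 1) * sumA (m + 1) a + (m + 1) * sumA (m + 1) a') /
        2 * Real.log π) =
      cexp (-s * (m * (m + 1) / 2 * Real.log π + (m + 1) * (Real.log π / 2) : ℝ)) *
        cexp (-sumA (m + 1) a * (Real.log π / 2 + m / 2 * Real.log π : ℝ)) *
        cexp (-sumA (m + 1) a' * (Real.log π / 2 + m / 2 * Real.log π : ℝ)) := by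
    rw [← Complex.exp_add, ← Complex.exp_add]
    push_cast
    ring_nf
  have hweight : gaussianDetWeight (s / 2) ξ =
      detWeight (s / 2) ξ * cexp ((-gaussianPotential ξ : ℝ)) := by
    rw [gaussianDetWeight, detWeight, ← Complex.exp_add, Complex.ofReal_neg, sub_eq_add_neg]
  rw [Nat.add_sub_cancel, pi_mul_extR_torusPoint_sq, whittAhat_torusPoint, whittAhat_torusPoint,
    hconst, hweight]
  ring

lemma zetaGLm_eq_zetaSucc (m : ℕ) (a a' : ℕ → ℂ) (s : ℂ) :
    zetaGLm (m + 2) (m + 1) a a' s =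
      cexp (-((m + 1) * (m + 2) * s + (m + 1) * sumA (m + 2) a + (m + 2) * sumA (m + 1) a') / 2 *
        Real.log π) * zetaSucc (s / 2) (halfParams (m + 2) a) (halfParams (m + 1) a') := by
  rw [zetaGLm, setIntegral_posSet_torusPoint (Real.log π), zetaSucc, ← integral_const_mul,
    ← integral_const_mul]
  congr 1 with ξ
  have hconst : cexp (-((m + 1) * (m + 2) * s + (m + 1) * sumA (m + 2) a +
        (m + 2) * sumA (m + 1) a') / 2 * Real.log π) =
      cexp (-s * (m * (m + 1) / 2 * Real.log π + (m + 1) * Real.log π : ℝ)) *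
        cexp (-sumA (m + 2) a * ((m + 1) / 2 * Real.log π : ℝ)) *
        cexp (-sumA (m + 1) a' * (Real.log π + m / 2 * Real.log π : ℝ)) := by
    rw [← Complex.exp_add, ← Complex.exp_add]
    push_cast
    ring_nf
  rw [whittAhat_succ_torusPoint, whittAhat_torusPoint, hconst]
  ring

lemma prod_gammaR (k : ℕ) (s c : ℂ) (a : ℕ → ℂ) :
    ∏ j ∈ Finset.range k, GammaR (s + c + a j) =
      cexp (-(k * (s + c) + sumA k a) / 2 * Real.log π) *
        ∏ j, Gamma (s / 2 + c / 2 + halfParams k a j) := by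
  have hexp : -(k * (s + c) + sumA k a) / 2 * Real.log π =
      ∑ j ∈ Finset.range k, -(s + c + a j) / 2 * (Real.log π : ℂ) := by
    rw [← Finset.sum_mul, ← Finset.sum_div, Finset.sum_neg_distrib, Finset.sum_add_distrib, sumA]
    simp only [Finset.sum_const, Finset.card_range, nsmul_eq_mul]
  rw [hexp, Complex.exp_sum, Finset.prod_range, Finset.prod_range, ← Finset.prod_mul_distrib]
  refine Finset.prod_congr rfl fun j _ => ?_
  rw [GammaR, halfParams, ← ofReal_exp_cpow, Real.exp_log Real.pi_pos, add_div, add_div]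

lemma halfParams_re_pos {n k : ℕ} {s : ℂ} {a a' : ℕ → ℂ}
    (h : ∀ i < n, ∀ j < k, 0 < (s + a i + a' j).re) (i : Fin n) (j : Fin k) :
    0 < (s / 2 + halfParams n a i + halfParams k a' j).re := by
  have hij := h i i.is_lt j j.is_lt
  rw [halfParams, halfParams, ← add_div, ← add_div, Complex.div_ofNat_re]
  positivity

lemma zetaGLGL_succ (m : ℕ) {s : ℂ} {a a' : ℕ → ℂ}
    (h : ∀ i < m + 2, ∀ j < m + 2, 0 < (s + a i + a' j).re) :
    zetaGLGL (m + 2) a a' s = (∏ j ∈ Finset.range (m + 2), GammaR (s + a' 0 + a j)) *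
      zetaGLm (m + 2) (m + 1) a (tildeA (m + 2) a') (s - a' 0 / (m + 1)) := by
  have hm : (m + 1 : ℂ) ≠ 0 := by exact_mod_cast m.succ_ne_zero
  have hshift : zetaSucc ((s - a' 0 / (m + 1)) / 2) (halfParams (m + 2) a)
        (halfParams (m + 1) (tildeA (m + 2) a')) =
      zetaSucc (s / 2) (halfParams (m + 2) a) (Fin.tail (halfParams (m + 2) a')) := by
    rw [halfParams_tildeA, zetaSucc_add_const, ← add_div, sub_add_cancel]
  rw [zetaGLGL_eq_zetaSelf, zetaSelf_succ (halfParams_re_pos h), prod_gammaR,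
    zetaGLm_eq_zetaSucc, sumA_tildeA, hshift, mul_mul_mul_comm, ← Complex.exp_add]
  congr 2
  push_cast
  field_simp
  ring

lemma zetaGLm_succ (m : ℕ) {s : ℂ} {a a' : ℕ → ℂ}
    (h : ∀ i < m + 2, ∀ j < m + 1, 0 < (s + a i + a' j).re) :
    zetaGLm (m + 2) (m + 1) a a' s = (∏ j ∈ Finset.range (m + 1), GammaR (s + a 0 + a' j)) *
      zetaGLGL (m + 1) (tildeA (m + 2) a) a' (s - a 0 / (m + 1)) := by
  have hm : (m + 1 : ℂ) ≠ 0 := by exact_mod_cast m.succ_ne_zero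
  have hshift : zetaSelf ((s - a 0 / (m + 1)) / 2) (halfParams (m + 1) (tildeA (m + 2) a))
        (halfParams (m + 1) a') =
      zetaSelf (s / 2) (Fin.tail (halfParams (m + 2) a)) (halfParams (m + 1) a') := by
    rw [halfParams_tildeA, zetaSelf_add_const, ← add_div, sub_add_cancel]
  rw [zetaGLm_eq_zetaSucc, zetaSucc_eq (halfParams_re_pos h), prod_gammaR,
    zetaGLGL_eq_zetaSelf, sumA_tildeA, hshift, mul_mul_mul_comm, ← Complex.exp_add]
  congr 2
  push_cast
  field_simp
  ring

theorem gl_gl_zeta_recursion_general (n : ℕ) (hn : 2 ≤ n) (s : ℂ) :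
    (∀ a a' : ℕ → ℂ, (∀ i < n, ∀ j < n, 0 < (s + a i + a' j).re) →
      zetaGLGL n a a' s =
        (∏ j ∈ Finset.range n, GammaR (s + a' 0 + a j)) *
          zetaGLm n (n - 1) a (tildeA n a') (s - a' 0 / ((n : ℂ) - 1))) ∧
    (∀ a a' : ℕ → ℂ, (∀ i < n, ∀ j < n - 1, 0 < (s + a i + a' j).re) →
      zetaGLm n (n - 1) a a' s =
        (∏ j ∈ Finset.range (n - 1), GammaR (s + a 0 + a' j)) *
          zetaGLGL (n - 1) (tildeA n a) a' (s - a 0 / ((n : ℂ) - 1))) := by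
  obtain ⟨m, rfl⟩ := Nat.exists_eq_add_of_le' hn
  have hcast : ((m + 2 : ℕ) : ℂ) - 1 = m + 1 := by
    push_cast
    ring
  rw [hcast, show m + 2 - 1 = m + 1 from rfl]
  exact ⟨fun _ _ h => zetaGLGL_succ m h, fun _ _ h => zetaGLm_succ m h⟩

end Recursion

/-- Recursive relations among archimedean `GL × GL` zeta integrals
(Proposition 2.2 of Ishii–Stade). -/
theorem gl_gl_zeta_recursion (n : ℕ) (hn : 2 ≤ n) (s : ℂ) (hs : 0 < s.re) :
    (∀ a a' : ℕ → ℂ, (∀ j < n, (a j).re = 0) → (∀ j < n, (a' j).re = 0) →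
      zetaGLGL n a a' s =
        (∏ j ∈ Finset.range n, GammaR (s + a' 0 + a j)) *
          zetaGLm n (n - 1) a (tildeA n a') (s - a' 0 / ((n : ℂ) - 1))) ∧
    (∀ a a' : ℕ → ℂ, (∀ j < n, (a j).re = 0) → (∀ j < n - 1, (a' j).re = 0) →
      zetaGLm n (n - 1) a a' s =
        (∏ j ∈ Finset.range (n - 1), GammaR (s + a 0 + a' j)) *
          zetaGLGL (n - 1) (tildeA n a) a' (s - a 0 / ((n : ℂ) - 1))) :=
  (gl_gl_zeta_recursion_general n hn s).imp
    (fun h a a' ha ha' => h a a' fun i hi j hj => by simpa [ha i hi, ha' j hj] using hs)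
    (fun h a a' ha ha' => h a a' fun i hi j hj => by simpa [ha i hi, ha' j hj] using hs)

end
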